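/- arXiv:1708.04918 — 2 statements merged into one kernel-verified Lean document; each statement's English description precedes it below -/
import Mathlib

section
/- Let α ∈ ℝ, let f(x,y) = y² + x²y + αx⁴, and let h : ℝ² → ℝ² be the diffeomorphism h(x̄,ȳ) = (x̄, −(1/2)x̄² − ȳ). Set λ = 6(α − 1/4). Then the pullback of the asymptotic BDE of f under h equals twice the BDE dy² + (−y + λx²)dx² = 0; precisely, for all (x̄,ȳ) ∈ ℝ² and all v = (v₁,v₂) ∈ ℝ², ω^f_{h(x̄,ȳ)}(Dh_{(x̄,ȳ)}(v)) = 2·(v₂² + (−ȳ + λx̄²)·v₁²). -/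
open Asymptotics Filter Set

noncomputable section

/-- Partial derivative in the first variable (∂/∂x). -/
def pdx (f : ℝ × ℝ → ℝ) (p : ℝ × ℝ) : ℝ := deriv (fun s => f (s, p.2)) p.1

/-- Partial derivative in the second variable (∂/∂y). -/
def pdy (f : ℝ × ℝ → ℝ) (p : ℝ × ℝ) : ℝ := deriv (fun s => f (p.1, s)) p.2

/-- f_xx -/
def fxx (f : ℝ × ℝ → ℝ) : ℝ × ℝ → ℝ := pdx (pdx f)
/-- f_xy -/
def fxy (f : ℝ × ℝ → ℝ) : ℝ × ℝ → ℝ := pdy (pdx f)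
/-- f_yy -/
def fyy (f : ℝ × ℝ → ℝ) : ℝ × ℝ → ℝ := pdy (pdy f)

/-- The discriminant δ = f_xy² − f_xx·f_yy of the asymptotic BDE of `f`. -/
def bdeDiscr (f : ℝ × ℝ → ℝ) : ℝ × ℝ → ℝ := fun p => (fxy f p) ^ 2 - fxx f p * fyy f p

/-- The BDE `a dy² + 2b dxdy + c dx² = 0`, regarded as the family of quadratic
forms `ω_p(v) = a(p)v₂² + 2b(p)v₁v₂ + c(p)v₁²`. -/
def BDE (a b c : ℝ × ℝ → ℝ) : (ℝ × ℝ) → (ℝ × ℝ) → ℝ :=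
  fun p v => a p * v.2 ^ 2 + 2 * b p * v.1 * v.2 + c p * v.1 ^ 2

/-- The asymptotic BDE `f_yy dy² + 2 f_xy dxdy + f_xx dx² = 0` of the surface `z = f(x,y)`. -/
def asymBDE (f : ℝ × ℝ → ℝ) : (ℝ × ℝ) → (ℝ × ℝ) → ℝ := BDE (fyy f) (fxy f) (fxx f)

/-- `j^k f(0) = P` : the degree-k Taylor polynomial of `f` at the origin is `P`,
i.e. `f − P = o(‖(x,y)‖^k)` as `(x,y) → 0`. -/
def HasJetAt0 (f P : ℝ × ℝ → ℝ) (k : ℕ) : Prop :=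
  (fun p => f p - P p) =o[nhds (0 : ℝ × ℝ)] fun p => ‖p‖ ^ k

/-- `γ` is an integral curve of the BDE `ω` on the open interval `I`:
`γ` is C¹ on `I` with nowhere-vanishing derivative annihilating `ω`. -/
def IsIntegralCurveOnBDE (ω : (ℝ × ℝ) → (ℝ × ℝ) → ℝ) (γ : ℝ → ℝ × ℝ) (I : Set ℝ) : Prop :=
  (∃ a b : ℝ, I = Set.Ioo a b) ∧
  ∃ dγ : ℝ → ℝ × ℝ, ContinuousOn dγ I ∧
    ∀ t ∈ I, HasDerivAt γ (dγ t) t ∧ dγ t ≠ 0 ∧ ω (γ t) (dγ t) = 0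

/-- Topological equivalence of two BDEs at the origin: a local homeomorphism
fixing `0` sending integral curves of one to integral curves of the other. -/
def TopEquivAt0 (ω Ω : (ℝ × ℝ) → (ℝ × ℝ) → ℝ) : Prop :=
  ∃ (U V : Set (ℝ × ℝ)) (h hinv : ℝ × ℝ → ℝ × ℝ),
    IsOpen U ∧ IsOpen V ∧ (0 : ℝ × ℝ) ∈ U ∧ (0 : ℝ × ℝ) ∈ V ∧ h 0 = 0 ∧
    ContinuousOn h U ∧ ContinuousOn hinv V ∧
    Set.BijOn h U V ∧ Set.InvOn hinv h U V ∧
    (∀ γ I, IsIntegralCurveOnBDE ω γ I → Set.MapsTo γ I U →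
      ∃ σ J, IsIntegralCurveOnBDE Ω σ J ∧ h '' (γ '' I) = σ '' J) ∧
    (∀ σ J, IsIntegralCurveOnBDE Ω σ J → Set.MapsTo σ J V →
      ∃ γ I, IsIntegralCurveOnBDE ω γ I ∧ hinv '' (σ '' J) = γ '' I)

/-- Smooth equivalence of two BDEs at the origin: a local C^∞ diffeomorphism `h`
fixing `0` pulling one family of quadratic forms back to a nonvanishing multiple
of the other. -/
def SmoothEquivAt0 (ω Ω : (ℝ × ℝ) → (ℝ × ℝ) → ℝ) : Prop :=
  ∃ (U V : Set (ℝ × ℝ)) (h hinv : ℝ × ℝ → ℝ × ℝ) (ρ : ℝ × ℝ → ℝ),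
    IsOpen U ∧ IsOpen V ∧ (0 : ℝ × ℝ) ∈ U ∧ (0 : ℝ × ℝ) ∈ V ∧ h 0 = 0 ∧
    ContDiffOn ℝ (⊤ : ℕ∞) h U ∧ ContDiffOn ℝ (⊤ : ℕ∞) hinv V ∧
    Set.BijOn h U V ∧ Set.InvOn hinv h U V ∧
    ContDiffOn ℝ (⊤ : ℕ∞) ρ U ∧ (∀ p ∈ U, ρ p ≠ 0) ∧
    (∀ p ∈ U, ∀ v : ℝ × ℝ, Ω (h p) (fderiv ℝ h p v) = ρ p * ω p v)

/-- Fiber topological equivalence at `0` of two 2-parameter families of BDEs: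
a homeomorphism `φ` of parameter spaces (onto its image), fixing `0`, such that
corresponding members of the families are topologically equivalent at `0`. -/
def FiberTopEquivAt0 (ω Ω : (ℝ × ℝ) → (ℝ × ℝ) → (ℝ × ℝ) → ℝ) : Prop :=
  ∃ (W : Set (ℝ × ℝ)) (φ ψ : ℝ × ℝ → ℝ × ℝ),
    W ∈ nhds (0 : ℝ × ℝ) ∧ φ 0 = 0 ∧
    ContinuousOn φ W ∧ ContinuousOn ψ (φ '' W) ∧
    Set.InvOn ψ φ W (φ '' W) ∧
    ∀ q ∈ W, TopEquivAt0 (ω q) (Ω (φ q))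

/-!
Completing the square, `y² + x²y + αx⁴ = (y + g(x))² + c(x)` with `g = x²/2` and
`c = (α - 1/4)x⁴`. For any surface `z = (y + g(x))² + c(x)` the reflection
`(x, y) ↦ (x, -g(x) - y)` turns `y + g(x)` into `-y`, and its derivative cancels the `dxdy` term
of the asymptotic BDE. What is left is `2 dy² + (c_xx - 2y·g_xx) dx²`, so `λx² = c_xx / 2`.
-/

/-- The function `(y + g(x))² + c(x)`, the general monic quadratic polynomial in `y` with
coefficients depending on `x`, written with its square completed. -/
def completedSquare (g c : ℝ → ℝ) (p : ℝ × ℝ) : ℝ := (p.2 + g p.1) ^ 2 + c p.1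

/-- The involution `(x, y) ↦ (x, -g(x) - y)` of the plane, which reflects each vertical line
in its intersection with `y = -g(x)/2` and exchanges the curve `y = -g(x)` with the `x`-axis. -/
def fiberReflection (g : ℝ → ℝ) (q : ℝ × ℝ) : ℝ × ℝ := (q.1, -g q.1 - q.2)

section CompletedSquare

variable {g g' g'' c c' c'' : ℝ → ℝ}

lemma pdx_completedSquare {p : ℝ × ℝ} (hg : HasDerivAt g (g' p.1) p.1)
    (hc : HasDerivAt c (c' p.1) p.1) :
    pdx (completedSquare g c) p = 2 * (p.2 + g p.1) * g' p.1 + c' p.1 := by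
  refine (((hg.const_add p.2).pow 2).add hc).deriv.trans ?_
  norm_num

lemma pdy_completedSquare (g c : ℝ → ℝ) (p : ℝ × ℝ) :
    pdy (completedSquare g c) p = 2 * (p.2 + g p.1) := by
  simp [pdy, completedSquare]

lemma fyy_completedSquare (g c : ℝ → ℝ) (p : ℝ × ℝ) : fyy (completedSquare g c) p = 2 := by
  rw [fyy, funext (pdy_completedSquare g c)]
  simp [pdy]

lemma fxy_completedSquare {p : ℝ × ℝ} (hg : HasDerivAt g (g' p.1) p.1)
    (hc : HasDerivAt c (c' p.1) p.1) : fxy (completedSquare g c) p = 2 * g' p.1 := by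
  have pdx_on_vertical_line : (fun s => pdx (completedSquare g c) (p.1, s)) =
      fun s => 2 * (s + g p.1) * g' p.1 + c' p.1 :=
    funext fun s => pdx_completedSquare (p := (p.1, s)) hg hc
  rw [fxy, pdy, pdx_on_vertical_line]
  simp

lemma fxx_completedSquare (hg : ∀ x, HasDerivAt g (g' x) x) (hc : ∀ x, HasDerivAt c (c' x) x)
    {p : ℝ × ℝ} (hg' : HasDerivAt g' (g'' p.1) p.1) (hc' : HasDerivAt c' (c'' p.1) p.1) :
    fxx (completedSquare g c) p =
      2 * g' p.1 ^ 2 + 2 * (p.2 + g p.1) * g'' p.1 + c'' p.1 := by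
  have pdx_eq : pdx (completedSquare g c) = fun p => 2 * (p.2 + g p.1) * g' p.1 + c' p.1 :=
    funext fun p => pdx_completedSquare (hg p.1) (hc p.1)
  rw [fxx, pdx_eq]
  refine (((((hg p.1).const_add p.2).const_mul 2).mul hg').add hc').deriv.trans ?_
  ring

lemma fderiv_fiberReflection {q : ℝ × ℝ} (hg : HasDerivAt g (g' q.1) q.1) (v : ℝ × ℝ) :
    fderiv ℝ (fiberReflection g) q v = (v.1, -g' q.1 * v.1 - v.2) := by
  have hasFDerivAt_reflection := (hasFDerivAt_fst (𝕜 := ℝ) (p := q)).prodMk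
    ((hg.comp_hasFDerivAt q hasFDerivAt_fst).neg.sub (hasFDerivAt_snd (𝕜 := ℝ) (p := q)))
  exact (DFunLike.congr_fun hasFDerivAt_reflection.fderiv v).trans (by simp)

theorem stmt2_general (hg : ∀ x, HasDerivAt g (g' x) x) (hg' : ∀ x, HasDerivAt g' (g'' x) x)
    (hc : ∀ x, HasDerivAt c (c' x) x) (hc' : ∀ x, HasDerivAt c' (c'' x) x) (q v : ℝ × ℝ) :
    asymBDE (completedSquare g c) (fiberReflection g q) (fderiv ℝ (fiberReflection g) q v) =
      2 * v.2 ^ 2 + (c'' q.1 - 2 * q.2 * g'' q.1) * v.1 ^ 2 := by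
  rw [fderiv_fiberReflection (hg q.1), asymBDE, BDE, fyy_completedSquare,
    fxy_completedSquare (hg _) (hc _), fxx_completedSquare hg hc (hg' _) (hc' _)]
  simp only [fiberReflection]
  ring

end CompletedSquare

lemma hasDerivAt_const_mul_pow_succ (k : ℝ) (n : ℕ) (x : ℝ) :
    HasDerivAt (fun x => k * x ^ (n + 1)) (k * (n + 1) * x ^ n) x := by
  simpa [mul_assoc] using (hasDerivAt_pow (n + 1) x).const_mul k

/-- explicit pullback computation for `f = y² + x²y + αx⁴` under
`h(x̄,ȳ) = (x̄, −x̄²/2 − ȳ)`: the pullback of the asymptotic BDE equals twice the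
BDE `dy² + (−y + λx²)dx²` with `λ = 6(α − 1/4)`. -/
theorem stmt2 (α : ℝ) (f : ℝ × ℝ → ℝ) (h : ℝ × ℝ → ℝ × ℝ) (lam : ℝ)
    (hdef : f = fun p => p.2 ^ 2 + p.1 ^ 2 * p.2 + α * p.1 ^ 4)
    (hh : h = fun q => (q.1, -(1 / 2) * q.1 ^ 2 - q.2))
    (hlam : lam = 6 * (α - 1 / 4)) :
    ∀ q v : ℝ × ℝ,
      asymBDE f (h q) (fderiv ℝ h q v) =
        2 * (v.2 ^ 2 + (-q.2 + lam * q.1 ^ 2) * v.1 ^ 2) := by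
  intro q v
  have f_eq : f = completedSquare (fun x => 1 / 2 * x ^ 2) (fun x => (α - 1 / 4) * x ^ 4) := by
    funext p
    simp only [hdef, completedSquare]
    ring
  have h_eq : h = fiberReflection (fun x => 1 / 2 * x ^ 2) := by
    funext q
    simp only [hh, fiberReflection, neg_mul]
  rw [f_eq, h_eq, stmt2_general
    (hasDerivAt_const_mul_pow_succ _ 1) (hasDerivAt_const_mul_pow_succ _ 0)
    (hasDerivAt_const_mul_pow_succ _ 3) (hasDerivAt_const_mul_pow_succ _ 2), hlam]
  push_cast
  ring
end
end

section
/- Let ε ∈ {1,−1}, α, β ∈ ℝ, and let f : ℝ² → ℝ be a smooth function whose 4-jet at the origin is j⁴f(0) = y² + εx⁴ + αx³y + βx²y². Let δ = f_xy² − f_xx·f_yy. Then δ(0) = 0, ∇δ(0) = (0,0), the Hessian matrix of δ at the origin equals [[−48ε, −12α], [−12α, −8β]], and det Hess δ(0) = −48·(3α² − 8εβ). In particular, the origin is a nondegenerate (Morse) critical point of δ if and only if 3α² − 8εβ ≠ 0. -/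
open Asymptotics Filter Set

noncomputable section

/-!
Jets may be differentiated: if a `C^(n+1)` function is `o(‖y - x‖^(n+1))` at `x`, then its
derivative is `o(‖y - x‖^n)`. Restricting to lines shows that all derivatives of order at most
`n + 1` vanish at `x` on diagonal vectors `(w, …, w)`; differentiating
`s ↦ D^(k+1) f(x)(w + s v, …, w + s v)` at `s = 0` polarizes this to `D^k (Df)(x)(w, …, w) = 0`,
and integrating back from the top order gives the estimate. Hence the 2-jet of `δ` depends only on
the 4-jet of `f`, so it is that of the discriminant of the polynomial itself, namely
`-24εx² - 12αxy - 4βy²`, from which the gradient and the Hessian are read off by differentiating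
the jet again.
-/

open scoped Topology

section DiagonalDerivatives

variable {E F : Type*} [NormedAddCommGroup E] [NormedSpace ℝ E] [NormedAddCommGroup F]
  [NormedSpace ℝ F] {f : E → F} {x : E} {n : ℕ}

theorem contDiff_fderiv_apply (hf : ContDiff ℝ (n + 1) f) (v : E) :
    ContDiff ℝ n fun y ↦ fderiv ℝ f y v :=
  (hf.fderiv_right le_rfl).clm_apply contDiff_const

theorem fderiv_fderiv_apply_comm (hf : ContDiff ℝ 2 f) (v w : E) :
    (fun y ↦ fderiv ℝ (fun z ↦ fderiv ℝ f z v) y w) =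
      fun y ↦ fderiv ℝ (fun z ↦ fderiv ℝ f z w) y v := by
  have hf' : Differentiable ℝ (fderiv ℝ f) :=
    (hf.fderiv_right (m := 1) (by norm_num)).differentiable one_ne_zero
  funext y
  rw [fderiv_clm_apply (hf' y) (differentiableAt_const v),
    fderiv_clm_apply (hf' y) (differentiableAt_const w)]
  simpa using hf.contDiffAt.isSymmSndFDerivAt (by simp) w v

theorem iteratedFDeriv_fderiv_apply_diag (hf : ContDiff ℝ (n + 1) f) (v w : E) :
    iteratedFDeriv ℝ n (fun y ↦ fderiv ℝ f y v) x (fun _ ↦ w) =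
      iteratedFDeriv ℝ n (fderiv ℝ f) x (fun _ ↦ w) v :=
  iteratedFDeriv_clm_apply_const_apply (hf.fderiv_right le_rfl) le_rfl

theorem iteratedFDeriv_succ_diag_add_smul (hf : ContDiff ℝ (n + 1) f) (v w : E) (s : ℝ) :
    iteratedFDeriv ℝ (n + 1) f x (fun _ ↦ w + s • v) =
      iteratedFDeriv ℝ n (fun y ↦ fderiv ℝ f y w) x (fun _ ↦ w + s • v) +
        s • iteratedFDeriv ℝ n (fun y ↦ fderiv ℝ f y v) x (fun _ ↦ w + s • v) := by
  rw [iteratedFDeriv_fderiv_apply_diag hf, iteratedFDeriv_fderiv_apply_diag hf, ← map_smul,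
    ← map_add, iteratedFDeriv_succ_apply_right]
  rfl

theorem hasDerivAt_iteratedFDeriv_diag (hf : ContDiff ℝ (n + 1) f) (v w : E) :
    HasDerivAt (fun s : ℝ ↦ iteratedFDeriv ℝ (n + 1) f x (fun _ ↦ w + s • v))
      ((n + 1 : ℝ) • iteratedFDeriv ℝ n (fun y ↦ fderiv ℝ f y v) x (fun _ ↦ w)) 0 := by
  induction n generalizing f with
  | zero =>
    simpa using (((hasDerivAt_id (0 : ℝ)).smul_const (fderiv ℝ f x v)).const_add
      (fderiv ℝ f x w))
  | succ n ih =>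
    simp only [iteratedFDeriv_succ_diag_add_smul hf]
    have hw := ih (contDiff_fderiv_apply hf w)
    have hv := ih (contDiff_fderiv_apply hf v)
    rw [fderiv_fderiv_apply_comm (hf.of_le (by norm_cast; lia)) w v] at hw
    have hsucc := iteratedFDeriv_succ_diag_add_smul (x := x) (contDiff_fderiv_apply hf v) v w 0
    simp only [zero_smul, add_zero] at hsucc
    convert! hw.add ((hasDerivAt_id (0 : ℝ)).smul hv) using 1
    simp only [id, zero_smul, add_zero, one_smul, zero_add, hsucc]
    push_cast
    module

theorem iteratedFDeriv_fderiv_diag_eq_zero (hf : ContDiff ℝ (n + 1) f)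
    (h : ∀ w, iteratedFDeriv ℝ (n + 1) f x (fun _ ↦ w) = 0) (w : E) :
    iteratedFDeriv ℝ n (fderiv ℝ f) x (fun _ ↦ w) = 0 := by
  ext v
  rw [← iteratedFDeriv_fderiv_apply_diag hf]
  have hderiv := hasDerivAt_iteratedFDeriv_diag (x := x) hf v w
  simp only [h] at hderiv
  have hzero := hderiv.unique (hasDerivAt_const _ _)
  exact (smul_eq_zero.mp hzero).resolve_left (by positivity)

theorem iteratedDeriv_comp_add_smul (hf : ContDiff ℝ n f) (x w : E) :
    iteratedDeriv n (fun t : ℝ ↦ f (x + t • w)) =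
      fun t ↦ iteratedFDeriv ℝ n f (x + t • w) (fun _ ↦ w) := by
  induction n with
  | zero => simp
  | succ n ih =>
    rw [iteratedDeriv_succ, ih (hf.of_le (by norm_cast; lia))]
    exact funext fun t ↦ hf.contDiffAt.deriv_fderiv_add_smul

theorem eq_zero_of_pow_smul_isLittleO {c : F} (h : (fun t : ℝ ↦ t ^ n • c) =o[𝓝 0] (· ^ n)) :
    c = 0 := by
  by_contra hc
  have hO : (fun t : ℝ ↦ t ^ n) =O[𝓝 0] fun t ↦ t ^ n • c :=
    .of_bound ‖c‖⁻¹ (.of_forall fun t ↦ by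
      rw [norm_smul, mul_comm, mul_inv_cancel_right₀ (norm_ne_zero_iff.mpr hc)])
  refine isLittleO_irrefl ?_ (hO.trans_isLittleO h)
  have hne : ∀ᶠ t : ℝ in 𝓝[≠] 0, t ^ n ≠ 0 :=
    eventually_mem_nhdsWithin.mono fun t ht ↦ pow_ne_zero n ht
  exact hne.frequently.filter_mono nhdsWithin_le_nhds

theorem iteratedDeriv_zero_eq_zero_of_isLittleO_pow {φ : ℝ → F} (hφ : ContDiff ℝ n φ)
    (h : φ =o[𝓝 0] (· ^ n)) {k : ℕ} (hk : k ≤ n) : iteratedDeriv k φ 0 = 0 := by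
  induction k using Nat.strong_induction_on with
  | _ k ih =>
    have htaylor := taylor_isLittleO_univ (x₀ := 0) (hφ.of_le (Nat.cast_le.mpr hk))
    have heval (t : ℝ) : taylorWithinEval φ k univ 0 t =
        t ^ k • ((k.factorial : ℝ)⁻¹ • iteratedDeriv k φ 0) := by
      rw [taylor_within_apply, Finset.sum_range_succ, Finset.sum_eq_zero, zero_add, sub_zero,
        iteratedDerivWithin_univ, smul_smul, mul_comm]
      intro j hj
      have hjk := Finset.mem_range.mp hj
      rw [iteratedDerivWithin_univ, ih j hjk (by lia), smul_zero]
    have hφk : φ =o[𝓝 0] (· ^ k) := by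
      obtain rfl | hlt := hk.eq_or_lt
      exacts [h, h.trans (isLittleO_pow_pow hlt)]
    simp only [heval, sub_zero] at htaylor
    have hcoeff := eq_zero_of_pow_smul_isLittleO (by simpa using hφk.sub htaylor)
    exact (smul_eq_zero.mp hcoeff).resolve_left (by positivity)

theorem iteratedFDeriv_diag_eq_zero_of_isLittleO_norm_sub_pow (hf : ContDiff ℝ n f)
    (h : f =o[𝓝 x] fun y ↦ ‖y - x‖ ^ n) {k : ℕ} (hk : k ≤ n) (w : E) :
    iteratedFDeriv ℝ k f x (fun _ ↦ w) = 0 := by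
  have hline : ContDiff ℝ n fun t : ℝ ↦ f (x + t • w) := hf.comp (by fun_prop)
  have htendsto : Tendsto (fun t : ℝ ↦ x + t • w) (𝓝 0) (𝓝 x) :=
    Continuous.tendsto' (by fun_prop) 0 x (by simp)
  have hnorm : (fun t : ℝ ↦ ‖x + t • w - x‖ ^ n) =O[𝓝 0] (· ^ n) :=
    .of_bound (‖w‖ ^ n) (.of_forall fun t ↦ by
      simp [norm_smul, mul_pow, mul_comm])
  have hflat := (h.comp_tendsto htendsto).trans_isBigO hnorm
  have hzero := iteratedDeriv_zero_eq_zero_of_isLittleO_pow hline hflat hk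
  rw [iteratedDeriv_comp_add_smul (hf.of_le (by norm_cast))] at hzero
  simpa using hzero

end DiagonalDerivatives

section Flatness

universe u

-- One universe for both spaces: the induction on the order passes from `F` to `E →L[ℝ] F`.
variable {E F : Type u} [NormedAddCommGroup E] [NormedSpace ℝ E] [NormedAddCommGroup F]
  [NormedSpace ℝ F] {f : E → F} {x : E} {n : ℕ}

theorem isLittleO_norm_sub_pow_of_iteratedFDeriv_diag_eq_zero (hf : ContDiff ℝ n f)
    (h : ∀ k ≤ n, ∀ w, iteratedFDeriv ℝ k f x (fun _ ↦ w) = 0) :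
    f =o[𝓝 x] fun y ↦ ‖y - x‖ ^ n := by
  have hfx : f x = 0 := by simpa using h 0 n.zero_le 0
  induction n generalizing F with
  | zero => simpa [isLittleO_one_iff, hfx] using hf.continuous.tendsto x
  | succ n ih =>
    have hf' : fderiv ℝ f =o[𝓝 x] fun y ↦ ‖y - x‖ ^ n := by
      have hvanish : ∀ k ≤ n, ∀ w, iteratedFDeriv ℝ k (fderiv ℝ f) x (fun _ ↦ w) = 0 := by
        intro k hk
        exact iteratedFDeriv_fderiv_diag_eq_zero (hf.of_le (by norm_cast; lia))
          (h (k + 1) (by lia))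
      exact ih (hf.fderiv_right le_rfl) hvanish (by simpa using hvanish 0 n.zero_le 0)
    have hdiff : Differentiable ℝ f := hf.differentiable (by simp)
    simpa [hfx] using convex_univ.isLittleO_pow_succ (mem_univ x)
      (fun y _ ↦ (hdiff y).hasFDerivAt.hasFDerivWithinAt) (by simpa using hf')

theorem fderiv_isLittleO_norm_sub_pow (hf : ContDiff ℝ (n + 1) f)
    (h : f =o[𝓝 x] fun y ↦ ‖y - x‖ ^ (n + 1)) :
    fderiv ℝ f =o[𝓝 x] fun y ↦ ‖y - x‖ ^ n := by
  refine isLittleO_norm_sub_pow_of_iteratedFDeriv_diag_eq_zero (hf.fderiv_right le_rfl)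
    fun k hk ↦ ?_
  exact iteratedFDeriv_fderiv_diag_eq_zero (hf.of_le (by norm_cast; lia))
    (iteratedFDeriv_diag_eq_zero_of_isLittleO_norm_sub_pow hf h (by lia))

end Flatness

section PartialDerivatives

variable {f : ℝ × ℝ → ℝ} {n : ℕ}

theorem pdx_eq_fderiv (hf : Differentiable ℝ f) : pdx f = fun p ↦ fderiv ℝ f p (1, 0) := by
  funext p
  have hline : HasDerivAt (fun s : ℝ ↦ (s, p.2)) (1, 0) p.1 :=
    (hasDerivAt_id _).prodMk (hasDerivAt_const _ _)
  exact ((hf p).hasFDerivAt.comp_hasDerivAt p.1 hline).deriv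

theorem pdy_eq_fderiv (hf : Differentiable ℝ f) : pdy f = fun p ↦ fderiv ℝ f p (0, 1) := by
  funext p
  have hline : HasDerivAt (fun s : ℝ ↦ (p.1, s)) (0, 1) p.2 :=
    (hasDerivAt_const _ _).prodMk (hasDerivAt_id _)
  exact ((hf p).hasFDerivAt.comp_hasDerivAt p.2 hline).deriv

theorem contDiff_pdx (hf : ContDiff ℝ (n + 1) f) : ContDiff ℝ n (pdx f) := by
  rw [pdx_eq_fderiv (hf.differentiable (by simp))]
  exact contDiff_fderiv_apply hf _

theorem contDiff_pdy (hf : ContDiff ℝ (n + 1) f) : ContDiff ℝ n (pdy f) := by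
  rw [pdy_eq_fderiv (hf.differentiable (by simp))]
  exact contDiff_fderiv_apply hf _

theorem contDiff_fxx (hf : ContDiff ℝ (n + 2) f) : ContDiff ℝ n (fxx f) :=
  contDiff_pdx (contDiff_pdx (n := n + 1) hf)

theorem contDiff_fxy (hf : ContDiff ℝ (n + 2) f) : ContDiff ℝ n (fxy f) :=
  contDiff_pdy (contDiff_pdx (n := n + 1) hf)

theorem contDiff_fyy (hf : ContDiff ℝ (n + 2) f) : ContDiff ℝ n (fyy f) :=
  contDiff_pdy (contDiff_pdy (n := n + 1) hf)

theorem contDiff_bdeDiscr (hf : ContDiff ℝ (n + 2) f) : ContDiff ℝ n (bdeDiscr f) :=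
  ((contDiff_fxy hf).pow 2).sub ((contDiff_fxx hf).mul (contDiff_fyy hf))

end PartialDerivatives

namespace HasJetAt0

variable {f g P Q : ℝ × ℝ → ℝ} {n : ℕ}

theorem eval_zero (h : HasJetAt0 f P n) : f 0 = P 0 := by
  refine sub_eq_zero.mp (norm_le_zero_iff.mp (le_of_forall_pos_le_add fun c hc ↦ ?_))
  calc ‖f 0 - P 0‖ ≤ c * ‖‖(0 : ℝ × ℝ)‖ ^ n‖ := (h.bound hc).self_of_nhds
    _ ≤ c * 1 := by gcongr; simpa using pow_le_one₀ le_rfl zero_le_one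
    _ = 0 + c := by ring

theorem trans (hf : HasJetAt0 f P n) (hP : HasJetAt0 P Q n) : HasJetAt0 f Q n := by
  simpa [HasJetAt0] using IsLittleO.add hf hP

theorem sub (hf : HasJetAt0 f P n) (hg : HasJetAt0 g Q n) :
    HasJetAt0 (fun p ↦ f p - g p) (fun p ↦ P p - Q p) n :=
  (IsLittleO.sub hf hg).congr_left fun p ↦ by ring

theorem mul (hf : HasJetAt0 f P n) (hg : HasJetAt0 g Q n) (hP : ContinuousAt P 0)
    (hgc : ContinuousAt g 0) : HasJetAt0 (fun p ↦ f p * g p) (fun p ↦ P p * Q p) n := by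
  have hleft := hf.mul_isBigO (hgc.isBigO_one ℝ)
  have hright := (hP.isBigO_one ℝ).mul_isLittleO hg
  simp only [mul_one, one_mul] at hleft hright
  exact (hleft.add hright).congr_left fun p ↦ by ring

theorem fderiv_apply (hf : ContDiff ℝ (n + 1) f) (hP : ContDiff ℝ (n + 1) P)
    (h : HasJetAt0 f P (n + 1)) (v : ℝ × ℝ) :
    HasJetAt0 (fun p ↦ fderiv ℝ f p v) (fun p ↦ fderiv ℝ P p v) n := by
  have hflat := fderiv_isLittleO_norm_sub_pow (x := 0) (hf.sub hP) (by simpa [HasJetAt0] using h)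
  simp only [sub_zero] at hflat
  refine IsBigO.trans_isLittleO (.of_bound ‖v‖ (.of_forall fun p ↦ ?_)) hflat
  rw [← _root_.sub_apply, ← fderiv_fun_sub (hf.differentiable (by simp) p)
    (hP.differentiable (by simp) p), mul_comm]
  exact ContinuousLinearMap.le_opNorm _ v

theorem pdx (hf : ContDiff ℝ (n + 1) f) (hP : ContDiff ℝ (n + 1) P)
    (h : HasJetAt0 f P (n + 1)) : HasJetAt0 (pdx f) (pdx P) n := by
  rw [pdx_eq_fderiv (hf.differentiable (by simp)), pdx_eq_fderiv (hP.differentiable (by simp))]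
  exact h.fderiv_apply hf hP _

theorem pdy (hf : ContDiff ℝ (n + 1) f) (hP : ContDiff ℝ (n + 1) P)
    (h : HasJetAt0 f P (n + 1)) : HasJetAt0 (pdy f) (pdy P) n := by
  rw [pdy_eq_fderiv (hf.differentiable (by simp)), pdy_eq_fderiv (hP.differentiable (by simp))]
  exact h.fderiv_apply hf hP _

theorem fxx (hf : ContDiff ℝ (n + 2) f) (hP : ContDiff ℝ (n + 2) P)
    (h : HasJetAt0 f P (n + 2)) : HasJetAt0 (fxx f) (fxx P) n :=
  (HasJetAt0.pdx (n := n + 1) hf hP h).pdx (contDiff_pdx hf) (contDiff_pdx hP)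

theorem fxy (hf : ContDiff ℝ (n + 2) f) (hP : ContDiff ℝ (n + 2) P)
    (h : HasJetAt0 f P (n + 2)) : HasJetAt0 (fxy f) (fxy P) n :=
  (HasJetAt0.pdx (n := n + 1) hf hP h).pdy (contDiff_pdx hf) (contDiff_pdx hP)

theorem fyy (hf : ContDiff ℝ (n + 2) f) (hP : ContDiff ℝ (n + 2) P)
    (h : HasJetAt0 f P (n + 2)) : HasJetAt0 (fyy f) (fyy P) n :=
  (HasJetAt0.pdy (n := n + 1) hf hP h).pdy (contDiff_pdy hf) (contDiff_pdy hP)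

theorem bdeDiscr (hf : ContDiff ℝ (n + 2) f) (hP : ContDiff ℝ (n + 2) P)
    (h : HasJetAt0 f P (n + 2)) : HasJetAt0 (bdeDiscr f) (bdeDiscr P) n := by
  have hsq := (h.fxy hf hP).mul (h.fxy hf hP) (contDiff_fxy hP).continuous.continuousAt
    (contDiff_fxy hf).continuous.continuousAt
  have hprod := (h.fxx hf hP).mul (h.fyy hf hP) (contDiff_fxx hP).continuous.continuousAt
    (contDiff_fyy hf).continuous.continuousAt
  exact (hsq.sub hprod).congr_left fun p ↦ by simp only [_root_.bdeDiscr, sq]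

end HasJetAt0

/-- The Hessian matrix of `g` at the origin; its `(i, j)` entry differentiates first in the
`i`-th variable and then in the `j`-th one. -/
def hessianAt0 (g : ℝ × ℝ → ℝ) : Matrix (Fin 2) (Fin 2) ℝ :=
  !![pdx (pdx g) 0, pdy (pdx g) 0; pdx (pdy g) 0, pdy (pdy g) 0]

section QuadraticForm

variable {g : ℝ × ℝ → ℝ} {a b c : ℝ}

theorem pdx_linearForm (a b : ℝ) : pdx (fun p ↦ a * p.1 + b * p.2) = fun _ ↦ a := by
  funext p
  simp [pdx]

theorem pdy_linearForm (a b : ℝ) : pdy (fun p ↦ a * p.1 + b * p.2) = fun _ ↦ b := by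
  funext p
  simp [pdy]

theorem pdx_quadraticForm (a b c : ℝ) :
    pdx (fun p ↦ a * p.1 ^ 2 + b * p.1 * p.2 + c * p.2 ^ 2) =
      fun p ↦ 2 * a * p.1 + b * p.2 := by
  funext p
  simp (disch := fun_prop) only [pdx, deriv_fun_add, deriv_fun_mul, deriv_fun_pow, deriv_const',
    deriv_id'', deriv_const_mul_id', Nat.cast_ofNat, Nat.add_one_sub_one]
  ring

theorem pdy_quadraticForm (a b c : ℝ) :
    pdy (fun p ↦ a * p.1 ^ 2 + b * p.1 * p.2 + c * p.2 ^ 2) =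
      fun p ↦ b * p.1 + 2 * c * p.2 := by
  funext p
  simp (disch := fun_prop) only [pdy, deriv_fun_add, deriv_fun_mul, deriv_fun_pow, deriv_const',
    deriv_id'', deriv_const_mul_id', Nat.cast_ofNat, Nat.add_one_sub_one]
  ring

theorem HasJetAt0.pdx_quadraticForm (hg : ContDiff ℝ 2 g)
    (h : HasJetAt0 g (fun p ↦ a * p.1 ^ 2 + b * p.1 * p.2 + c * p.2 ^ 2) 2) :
    HasJetAt0 (_root_.pdx g) (fun p ↦ 2 * a * p.1 + b * p.2) 1 := by
  rw [← _root_.pdx_quadraticForm a b c]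
  exact HasJetAt0.pdx (n := 1) hg (by fun_prop) h

theorem HasJetAt0.pdy_quadraticForm (hg : ContDiff ℝ 2 g)
    (h : HasJetAt0 g (fun p ↦ a * p.1 ^ 2 + b * p.1 * p.2 + c * p.2 ^ 2) 2) :
    HasJetAt0 (_root_.pdy g) (fun p ↦ b * p.1 + 2 * c * p.2) 1 := by
  rw [← _root_.pdy_quadraticForm a b c]
  exact HasJetAt0.pdy (n := 1) hg (by fun_prop) h

theorem pdx_pdy_zero_of_hasJetAt0_linearForm (hg : ContDiff ℝ 1 g)
    (h : HasJetAt0 g (fun p ↦ a * p.1 + b * p.2) 1) : pdx g 0 = a ∧ pdy g 0 = b := by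
  have hx := (HasJetAt0.pdx (n := 0) (by simpa using hg) (by fun_prop) h).eval_zero
  have hy := (HasJetAt0.pdy (n := 0) (by simpa using hg) (by fun_prop) h).eval_zero
  rw [pdx_linearForm] at hx
  rw [pdy_linearForm] at hy
  exact ⟨hx, hy⟩

theorem hessianAt0_of_hasJetAt0_quadraticForm (hg : ContDiff ℝ 2 g)
    (h : HasJetAt0 g (fun p ↦ a * p.1 ^ 2 + b * p.1 * p.2 + c * p.2 ^ 2) 2) :
    hessianAt0 g = !![2 * a, b; b, 2 * c] := by
  obtain ⟨hxx, hxy⟩ := pdx_pdy_zero_of_hasJetAt0_linearForm (contDiff_pdx (n := 1) hg)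
    (h.pdx_quadraticForm hg)
  obtain ⟨hyx, hyy⟩ := pdx_pdy_zero_of_hasJetAt0_linearForm (contDiff_pdy (n := 1) hg)
    (h.pdy_quadraticForm hg)
  rw [hessianAt0, hxx, hxy, hyx, hyy]

end QuadraticForm

section NormalForm

/-- The quartic polynomial `y² + εx⁴ + αx³y + βx²y²` prescribed as 4-jet; its discriminant is the
model to which `bdeDiscr f` is compared. -/
def jetNormalForm (ε α β : ℝ) : ℝ × ℝ → ℝ := fun p ↦
  p.2 ^ 2 + ε * p.1 ^ 4 + α * p.1 ^ 3 * p.2 + β * p.1 ^ 2 * p.2 ^ 2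

variable (ε α β : ℝ)

theorem contDiff_jetNormalForm {n : WithTop ℕ∞} : ContDiff ℝ n (jetNormalForm ε α β) := by
  unfold jetNormalForm
  fun_prop

theorem pdx_jetNormalForm : pdx (jetNormalForm ε α β) =
    fun p ↦ 4 * ε * p.1 ^ 3 + 3 * α * p.1 ^ 2 * p.2 + 2 * β * p.1 * p.2 ^ 2 := by
  funext p
  simp (disch := fun_prop) only [pdx, jetNormalForm, deriv_fun_add, deriv_fun_mul, deriv_fun_pow,
    deriv_const', deriv_id'', Nat.cast_ofNat, Nat.add_one_sub_one]
  ring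

theorem pdy_jetNormalForm : pdy (jetNormalForm ε α β) =
    fun p ↦ 2 * p.2 + α * p.1 ^ 3 + 2 * β * p.1 ^ 2 * p.2 := by
  funext p
  simp (disch := fun_prop) only [pdy, jetNormalForm, deriv_fun_add, deriv_fun_mul, deriv_fun_pow,
    deriv_const', deriv_id'', deriv_const_mul_id', Nat.cast_ofNat, Nat.add_one_sub_one]
  ring

theorem fxx_jetNormalForm : fxx (jetNormalForm ε α β) =
    fun p ↦ 12 * ε * p.1 ^ 2 + 6 * α * p.1 * p.2 + 2 * β * p.2 ^ 2 := by
  funext p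
  rw [fxx, pdx_jetNormalForm]
  simp (disch := fun_prop) only [pdx, deriv_fun_add, deriv_fun_mul, deriv_fun_pow, deriv_const',
    deriv_id'', deriv_const_mul_id', Nat.cast_ofNat, Nat.add_one_sub_one]
  ring

theorem fxy_jetNormalForm : fxy (jetNormalForm ε α β) =
    fun p ↦ 3 * α * p.1 ^ 2 + 4 * β * p.1 * p.2 := by
  funext p
  rw [fxy, pdx_jetNormalForm]
  simp (disch := fun_prop) only [pdy, deriv_fun_add, deriv_fun_mul, deriv_fun_pow, deriv_const',
    deriv_id'', deriv_const_mul_id', Nat.cast_ofNat, Nat.add_one_sub_one]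
  ring

theorem fyy_jetNormalForm : fyy (jetNormalForm ε α β) = fun p ↦ 2 + 2 * β * p.1 ^ 2 := by
  funext p
  rw [fyy, pdy_jetNormalForm]
  simp (disch := fun_prop) only [pdy, deriv_fun_add, deriv_fun_mul, deriv_fun_pow, deriv_const',
    deriv_const_mul_id', Nat.cast_ofNat, Nat.add_one_sub_one]
  ring

theorem hasJetAt0_bdeDiscr_jetNormalForm :
    HasJetAt0 (bdeDiscr (jetNormalForm ε α β))
      (fun p ↦ -24 * ε * p.1 ^ 2 + -12 * α * p.1 * p.2 + -4 * β * p.2 ^ 2) 2 := by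
  -- Beyond its quadratic part, the discriminant is `x²` times a quadratic form.
  have hsq : (fun p : ℝ × ℝ ↦ p.1 ^ 2) =O[𝓝 0] fun p ↦ ‖p‖ ^ 2 :=
    IsBigO.pow (.of_norm_le norm_fst_le) 2
  have hcofactor : (fun p : ℝ × ℝ ↦ (3 * α * p.1 + 4 * β * p.2) ^ 2
      - 2 * β * (12 * ε * p.1 ^ 2 + 6 * α * p.1 * p.2 + 2 * β * p.2 ^ 2)) =o[𝓝 0]
      fun _ ↦ (1 : ℝ) :=
    (isLittleO_one_iff ℝ).mpr (Continuous.tendsto' (by fun_prop) 0 0 (by simp))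
  refine (hsq.mul_isLittleO hcofactor).congr (fun p ↦ ?_) fun p ↦ mul_one _
  rw [bdeDiscr, fxx_jetNormalForm, fxy_jetNormalForm, fyy_jetNormalForm]
  ring

end NormalForm

theorem stmt4_general (ε α β : ℝ) (f : ℝ × ℝ → ℝ) (hf : ContDiff ℝ 4 f)
    (hjet : HasJetAt0 f
      (fun p => p.2 ^ 2 + ε * p.1 ^ 4 + α * p.1 ^ 3 * p.2 + β * p.1 ^ 2 * p.2 ^ 2) 4) :
    bdeDiscr f 0 = 0 ∧
    (pdx (bdeDiscr f) 0, pdy (bdeDiscr f) 0) = (0, 0) ∧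
    hessianAt0 (bdeDiscr f) = !![-48 * ε, -12 * α; -12 * α, -8 * β] ∧
    (hessianAt0 (bdeDiscr f)).det = -48 * (3 * α ^ 2 - 8 * ε * β) ∧
    ((hessianAt0 (bdeDiscr f)).det ≠ 0 ↔ 3 * α ^ 2 - 8 * ε * β ≠ 0) := by
  have hδ : ContDiff ℝ 2 (bdeDiscr f) := contDiff_bdeDiscr (n := 2) hf
  have hδjet := (HasJetAt0.bdeDiscr (n := 2) hf (contDiff_jetNormalForm ε α β) hjet).trans
    (hasJetAt0_bdeDiscr_jetNormalForm ε α β)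
  have hhess : hessianAt0 (bdeDiscr f) = !![-48 * ε, -12 * α; -12 * α, -8 * β] := by
    rw [hessianAt0_of_hasJetAt0_quadraticForm hδ hδjet]
    ring_nf
  have hdet : (hessianAt0 (bdeDiscr f)).det = -48 * (3 * α ^ 2 - 8 * ε * β) := by
    rw [hhess, Matrix.det_fin_two_of]
    ring
  refine ⟨?_, ?_, hhess, hdet, ?_⟩
  · simpa using hδjet.eval_zero
  · rw [(hδjet.pdx_quadraticForm hδ).eval_zero, (hδjet.pdy_quadraticForm hδ).eval_zero]
    simp
  · simp [hdet]

/-- for smooth `f` with `j⁴f(0) = y² + εx⁴ + αx³y + βx²y²`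
(`ε = ±1`), the discriminant `δ` vanishes at `0` together with its gradient,
`Hess δ(0) = [[−48ε, −12α], [−12α, −8β]]`, `det Hess δ(0) = −48(3α² − 8εβ)`,
and `0` is a nondegenerate critical point of `δ` iff `3α² − 8εβ ≠ 0`. -/
theorem stmt4 (ε α β : ℝ) (hε : ε = 1 ∨ ε = -1) (f : ℝ × ℝ → ℝ)
    (hf : ContDiff ℝ (⊤ : ℕ∞) f)
    (hjet : HasJetAt0 f
      (fun p => p.2 ^ 2 + ε * p.1 ^ 4 + α * p.1 ^ 3 * p.2 + β * p.1 ^ 2 * p.2 ^ 2) 4) :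
    bdeDiscr f 0 = 0 ∧
    (pdx (bdeDiscr f) 0, pdy (bdeDiscr f) 0) = (0, 0) ∧
    (!![pdx (pdx (bdeDiscr f)) 0, pdy (pdx (bdeDiscr f)) 0;
        pdx (pdy (bdeDiscr f)) 0, pdy (pdy (bdeDiscr f)) 0] =
      !![-48 * ε, -12 * α; -12 * α, -8 * β]) ∧
    Matrix.det !![pdx (pdx (bdeDiscr f)) 0, pdy (pdx (bdeDiscr f)) 0;
        pdx (pdy (bdeDiscr f)) 0, pdy (pdy (bdeDiscr f)) 0] =
      -48 * (3 * α ^ 2 - 8 * ε * β) ∧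
    (Matrix.det !![pdx (pdx (bdeDiscr f)) 0, pdy (pdx (bdeDiscr f)) 0;
        pdx (pdy (bdeDiscr f)) 0, pdy (pdy (bdeDiscr f)) 0] ≠ 0 ↔
      3 * α ^ 2 - 8 * ε * β ≠ 0) :=
  stmt4_general ε α β f (hf.of_le (WithTop.coe_le_coe.mpr le_top)) hjet
end
end
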